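/- Let F = ⋃_{j=1}^J φ_j(F) ⊂ ℝ be a self-similar fractal in dimension d = 1, where the similitudes φ_j have ratios 0 < r_j < 1, satisfying the open set condition with the interior of the interval I = [F] as feasible open set, and suppose I ∖ ⋃_j φ_j(I) consists of Q ≥ 1 open intervals (gaps) of lengths l_1,…,l_Q. Let D ∈ (0,1) be the unique real root of ∑_{j=1}^J r_j^D = 1. If the IFS is of non-lattice type (the subgroup ∑_j (log r_j)ℤ of ℝ is dense), then F is Minkowski measurable with Minkowski content M(F) = (2^{1−D} ∑_{q=1}^Q l_q^D) / (D(1−D) ∑_{j=1}^J r_j^D log r_j^{−1}). -/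

import Mathlib

open MeasureTheory Filter

/-!
The endpoints of each piece `φ j '' [A, B]` and of each gap lie in `F`, so the `ε`-thickening of `F`
can be measured separately inside each piece and each gap. This gives the scaling equation
`V ε = ∑ r j * V (ε / r j) + ∑ min (2 * ε) (l q)` for the length `V` of the thickening inside
`[A, B]`, which in the coordinate `ε = exp (-t)` is a renewal equation `f = ∑ p j * f (· - c j) + h`
for `f t = exp ((1 - D) * t) * V (exp (-t))` with weights `p j = r j ^ D` of total mass `1`.

Discreteness of the step distribution makes the renewal theorem elementary. The sums `∑ p j * ∫ f`
over the windows `[t - c j, t]` equal `∫ h` over `(-∞, t]`, so they tend to `∫ h`. If `f` is close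
to its `limsup` at some time, the renewal equation forces it to be so at earlier times, shifted by
any element of the semigroup generated by the `c j`. In the non-lattice case this semigroup is
eventually dense, and `f` cannot rise quickly, so `f` is close to its `limsup` on whole windows.
Hence `limsup f` times `∑ p j * c j` is at most `∫ h`; the same argument for `-f` bounds the
`liminf` from below.
-/

open Function Set Topology

section DenseSemigroup

theorem exists_sub_eq_of_mem_closure {G : Type*} [AddCommGroup G] {S : Set G} {x : G}
    (hx : x ∈ AddSubgroup.closure S) :
    ∃ a ∈ AddSubmonoid.closure S, ∃ b ∈ AddSubmonoid.closure S, a - b = x := by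
  rw [← AddSubgroup.mem_toAddSubmonoid, AddSubgroup.closure_toAddSubmonoid,
    AddSubmonoid.closure_union, AddSubmonoid.mem_sup] at hx
  obtain ⟨a, ha, b, hb, rfl⟩ := hx
  rw [AddSubmonoid.closure_neg, AddSubmonoid.mem_neg] at hb
  exact ⟨a, ha, -b, hb, sub_neg_eq_add a b⟩

theorem exists_closure_pos_sub_mem_Ioo {S : Set ℝ}
    (hdense : Dense (AddSubgroup.closure S : Set ℝ)) (hpos : ∃ c ∈ S, 0 < c)
    {δ : ℝ} (hδ : 0 < δ) :
    ∃ a ∈ AddSubmonoid.closure S, ∃ b ∈ AddSubmonoid.closure S, 0 < b ∧ a - b ∈ Ioo 0 δ := by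
  obtain ⟨d, hd, hdδ⟩ := hdense.exists_mem_open isOpen_Ioo (nonempty_Ioo.2 hδ)
  obtain ⟨a, ha, b, hb, rfl⟩ := exists_sub_eq_of_mem_closure hd
  obtain ⟨c, hc, hc0⟩ := hpos
  obtain ⟨n, hn⟩ := exists_lt_nsmul hc0 (-b)
  have hnc : n • c ∈ AddSubmonoid.closure S := nsmul_mem (AddSubmonoid.subset_closure hc) n
  exact ⟨a + n • c, add_mem ha hnc, b + n • c, add_mem hb hnc, by linarith, by simpa using hdδ⟩

/- With `d = a - b` small, the points `n • b + k • d = (n - k) • b + k • a`, `0 ≤ k ≤ n`, lie in the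
semigroup and form a `d`-net of `[n b, (n + 1) b]` as soon as `n d ≥ b`. -/
theorem eventually_exists_closure_sub_mem_Ico {S : Set ℝ}
    (hdense : Dense (AddSubgroup.closure S : Set ℝ)) (hpos : ∃ c ∈ S, 0 < c)
    {δ : ℝ} (hδ : 0 < δ) :
    ∀ᶠ x in atTop, ∃ s ∈ AddSubmonoid.closure S, x - s ∈ Ico 0 δ := by
  obtain ⟨a, ha, b, hb, hb0, hd0, hdδ⟩ := exists_closure_pos_sub_mem_Ioo hdense hpos hδ
  set d := a - b with hd
  obtain ⟨N, hN⟩ := exists_nat_ge (b / d)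
  filter_upwards [eventually_ge_atTop (N * b), eventually_ge_atTop 0] with x hNx hx
  set n := ⌊x / b⌋₊
  have hnx : n * b ≤ x := (le_div_iff₀ hb0).1 (Nat.floor_le (by positivity))
  have hxn : x < (n + 1) * b := (div_lt_iff₀ hb0).1 (Nat.lt_floor_add_one _)
  set k := ⌊(x - n * b) / d⌋₊
  have hkx : k * d ≤ x - n * b :=
    (le_div_iff₀ hd0).1 (Nat.floor_le (div_nonneg (sub_nonneg.2 hnx) hd0.le))
  have hxk : x - n * b < (k + 1) * d := (div_lt_iff₀ hd0).1 (Nat.lt_floor_add_one _)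
  have hkn : k ≤ n := by
    have hNn : N ≤ n := Nat.le_floor ((le_div_iff₀ hb0).2 hNx)
    have hbn : b / d ≤ n := hN.trans (mod_cast hNn)
    have hkb : k * d < b := by linarith
    exact_mod_cast ((lt_div_iff₀ hd0).2 hkb).le.trans hbn
  have hs : ((n - k) • b + k • a : ℝ) = n * b + k * d := by
    simp only [nsmul_eq_mul, Nat.cast_sub hkn, hd]
    ring
  refine ⟨(n - k) • b + k • a, add_mem (nsmul_mem hb _) (nsmul_mem ha _), ?_⟩
  rw [hs]
  constructor <;> linarith

theorem eventually_exists_closure_sub_mem {S : Set ℝ}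
    (hdense : Dense (AddSubgroup.closure S : Set ℝ)) (hpos : ∃ c ∈ S, 0 < c)
    {U : Set ℝ} (hU : IsOpen U) (hUne : U.Nonempty) :
    ∀ᶠ x in atTop, ∃ s ∈ AddSubmonoid.closure S, x - s ∈ U := by
  obtain ⟨u, hu⟩ := hUne
  obtain ⟨δ, hδ, hδU⟩ := Metric.isOpen_iff.1 hU u hu
  have hev := eventually_exists_closure_sub_mem_Ico hdense hpos hδ
  filter_upwards [(tendsto_atTop_add_const_right _ (-u) tendsto_id).eventually hev]
    with x ⟨s, hs, hxs⟩
  refine ⟨s, hs, hδU ?_⟩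
  rw [Metric.mem_ball, Real.dist_eq, abs_lt]
  simp only [id, mem_Ico] at hxs
  constructor <;> linarith

theorem exists_finite_subset_forall_Icc_sub_mem {S U : Set ℝ} (hU : IsOpen U)
    {R : ℝ} (hR : ∀ x ≥ R, ∃ s ∈ S, x - s ∈ U) (R' : ℝ) :
    ∃ T ⊆ S, T.Finite ∧ ∀ x ∈ Icc R R', ∃ s ∈ T, x - s ∈ U := by
  have hcover : Icc R R' ⊆ ⋃ s ∈ S, (· - s) ⁻¹' U := fun x hx => by
    simpa only [mem_iUnion₂, mem_preimage, exists_prop] using hR x hx.1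
  obtain ⟨T, hTS, hT, hTcover⟩ := isCompact_Icc.elim_finite_subcover_image
    (fun s _ => hU.preimage (continuous_sub_right s)) hcover
  refine ⟨T, hTS, hT, fun x hx => ?_⟩
  simpa only [mem_iUnion₂, mem_preimage, exists_prop] using hTcover hx

end DenseSemigroup

section Renewal

/-- `f` solves the renewal equation `f t = ∑ j, p j * f (t - c j) + h t` on the whole line, with
positive steps `c j`, positive weights `p j` of total mass one, and forcing term `h`. -/
structure IsRenewalSolution {ι : Type*} [Fintype ι] (c p : ι → ℝ) (h f : ℝ → ℝ) : Prop where
  step_pos : ∀ j, 0 < c j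
  weight_pos : ∀ j, 0 < p j
  sum_weight : ∑ j, p j = 1
  eq : ∀ t, f t = ∑ j, p j * f (t - c j) + h t

/-- A translation-uniform, one-sided form of slow variation: for every `η > 0`, translating by any
`u` in a suitable nonempty open set of increments raises `f` by at most `η`. Increments are not
required to be positive, so that the notion covers both a slowly increasing function (small
`u > 0`) and its negative (small `u < 0`). -/
def HasSmallIncrements (f : ℝ → ℝ) : Prop :=
  ∀ η > 0, ∃ U : Set ℝ, IsOpen U ∧ U.Nonempty ∧ ∀ x, ∀ u ∈ U, f (x + u) ≤ f x + η

variable {ι : Type*} [Fintype ι] {c p : ι → ℝ} {f h : ℝ → ℝ}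

namespace IsRenewalSolution

theorem neg (hf : IsRenewalSolution c p h f) : IsRenewalSolution c p (-h) (-f) where
  step_pos := hf.step_pos
  weight_pos := hf.weight_pos
  sum_weight := hf.sum_weight
  eq t := by
    simp only [Pi.neg_apply, hf.eq t, mul_neg, Finset.sum_neg_distrib]
    ring

theorem nonempty (hf : IsRenewalSolution c p h f) : Nonempty ι := by
  by_contra hempty
  rw [not_nonempty_iff] at hempty
  simpa using hf.sum_weight

theorem mean_pos (hf : IsRenewalSolution c p h f) : 0 < ∑ j, p j * c j :=
  have := hf.nonempty
  Finset.sum_pos (fun j _ => mul_pos (hf.weight_pos j) (hf.step_pos j)) Finset.univ_nonempty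

/- `f (u n)` is an average of the values `f (u n - c j)`, up to a vanishing error. None of these can
exceed `β` in the limit, so none of them can stay below `β`. -/
theorem tendsto_sub_step (hf : IsRenewalSolution c p h f) (hh : Tendsto h atTop (𝓝 0)) {β : ℝ}
    (hβ : ∀ b > β, ∀ᶠ x in atTop, f x < b) {α : Type*} {l : Filter α} {u : α → ℝ}
    (hu : Tendsto u l atTop) (hfu : Tendsto (fun n => f (u n)) l (𝓝 β)) (j : ι) :
    Tendsto (fun n => f (u n - c j)) l (𝓝 β) := by
  classical
  have hsub (i : ι) : Tendsto (fun n => u n - c i) l atTop :=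
    tendsto_atTop_add_const_right _ (-c i) hu
  have hpj := hf.weight_pos j
  refine tendsto_order.2 ⟨fun b hb => ?_, fun b hb => (hsub j).eventually (hβ b hb)⟩
  obtain ⟨η, hη, hηb⟩ : ∃ η > 0, (1 - p j) * η < p j * (β - b) :=
    ⟨p j * (β - b), mul_pos hpj (sub_pos.2 hb),
      mul_lt_of_lt_one_left (mul_pos hpj (sub_pos.2 hb)) (sub_lt_self 1 hpj)⟩
  have hbelow : ∀ᶠ n in l, ∀ i, f (u n - c i) < β + η :=
    eventually_all.2 fun i => (hsub i).eventually (hβ _ (lt_add_of_pos_right β hη))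
  have hlim : Tendsto (fun n => f (u n) - (1 - p j) * (β + η) - h (u n)) l
      (𝓝 (β - (1 - p j) * (β + η) - 0)) := (hfu.sub_const _).sub (hh.comp hu)
  have hlt : p j * b < β - (1 - p j) * (β + η) - 0 := by
    linarith
  filter_upwards [hbelow, hlim.eventually (lt_mem_nhds hlt)] with n hbelow hn
  have hrest : ∑ i ∈ Finset.univ.erase j, p i * f (u n - c i) ≤ (1 - p j) * (β + η) := by
    rw [← hf.sum_weight, ← Finset.sum_erase_eq_sub (Finset.mem_univ j), Finset.sum_mul]
    exact Finset.sum_le_sum fun i _ =>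
      mul_le_mul_of_nonneg_left (hbelow i).le (hf.weight_pos i).le
  have heq := hf.eq (u n)
  rw [← Finset.add_sum_erase _ _ (Finset.mem_univ j)] at heq
  exact lt_of_mul_lt_mul_left (by linarith) hpj.le

theorem tendsto_sub (hf : IsRenewalSolution c p h f) (hh : Tendsto h atTop (𝓝 0)) {β : ℝ}
    (hβ : ∀ b > β, ∀ᶠ x in atTop, f x < b) {α : Type*} {l : Filter α} {s : ℝ}
    (hs : s ∈ AddSubmonoid.closure (range c)) {u : α → ℝ} (hu : Tendsto u l atTop)
    (hfu : Tendsto (fun n => f (u n)) l (𝓝 β)) : Tendsto (fun n => f (u n - s)) l (𝓝 β) := by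
  induction hs using AddSubmonoid.closure_induction generalizing u with
  | zero => simpa only [sub_zero] using hfu
  | add s s' _ _ ihs ihs' =>
    simpa only [sub_sub, ← sub_eq_add_neg] using
      ihs' (tendsto_atTop_add_const_right _ (-s) hu) (ihs hu hfu)
  | mem s hs =>
    obtain ⟨j, rfl⟩ := hs
    exact hf.tendsto_sub_step hh hβ hu hfu j

theorem frequently_forall_Icc_le (hf : IsRenewalSolution c p h f) (hh : Tendsto h atTop (𝓝 0))
    (hdense : Dense (AddSubgroup.closure (range c) : Set ℝ)) (hinc : HasSmallIncrements f)
    (habove : IsBoundedUnder (· ≤ ·) atTop f) (hbelow : IsBoundedUnder (· ≥ ·) atTop f)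
    {b : ℝ} (hb : b < limsup f atTop) (K : ℝ) :
    ∃ᶠ T in atTop, ∀ x ∈ Icc (T - K) T, b ≤ f x := by
  set β := limsup f atTop
  obtain ⟨U, hU, hUne, hfU⟩ := hinc ((β - b) / 2) (by linarith)
  have hstep : ∃ s ∈ range c, 0 < s :=
    have ⟨j⟩ := hf.nonempty
    ⟨c j, mem_range_self j, hf.step_pos j⟩
  obtain ⟨R, hR⟩ := eventually_atTop.1 (eventually_exists_closure_sub_mem hdense hstep hU hUne)
  obtain ⟨S, hS, hSfin, hnet⟩ := exists_finite_subset_forall_Icc_sub_mem hU hR (R + K)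
  obtain ⟨t, hft, ht⟩ := exists_seq_tendsto_limsup hbelow.isCoboundedUnder_le habove
  have hlarge : ∀ᶠ n in atTop, ∀ s ∈ S, β - (β - b) / 2 < f (t n - s) :=
    (eventually_all_finite hSfin).2 fun s hs =>
      have hlim :=
        hf.tendsto_sub hh (fun _ hb => eventually_lt_of_limsup_lt hb habove) (hS hs) ht hft
      hlim.eventually (lt_mem_nhds (by linarith))
  refine (tendsto_atTop_add_const_right _ (-R) ht).frequently
    (hlarge.mono fun n hn x hx => ?_).frequently
  obtain ⟨s, hs, hsU⟩ := hnet (t n - x) ⟨by linarith [hx.2], by linarith [hx.1]⟩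
  have hle := hfU x _ hsU
  rw [show x + (t n - x - s) = t n - s by ring] at hle
  linarith [hn s hs]

end IsRenewalSolution

theorem integrableOn_Iic_comp_sub_right {E : Type*} [NormedAddCommGroup E] {f : ℝ → E} {s t : ℝ} :
    IntegrableOn (fun x => f (x - s)) (Iic t) ↔ IntegrableOn f (Iic (t - s)) := by
  simpa [Function.comp_def] using ((measurePreserving_sub_right volume s).integrableOn_comp_preimage
    (measurableEmbedding_subRight s) (f := f) (s := Iic (t - s)))

theorem setIntegral_Iic_comp_sub_right {E : Type*} [NormedAddCommGroup E] [NormedSpace ℝ E]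
    (f : ℝ → E) (s t : ℝ) : ∫ x in Iic t, f (x - s) = ∫ x in Iic (t - s), f x := by
  simpa using (measurePreserving_sub_right volume s).setIntegral_preimage_emb
    (measurableEmbedding_subRight s) f (Iic (t - s))

namespace IsRenewalSolution

theorem sum_mul_intervalIntegral (hf : IsRenewalSolution c p h f)
    (hfint : ∀ t, IntegrableOn f (Iic t)) (t : ℝ) :
    ∑ j, p j * ∫ x in (t - c j)..t, f x = ∫ x in Iic t, h x := by
  have hterm (j : ι) : IntegrableOn (fun x => p j * f (x - c j)) (Iic t) :=
    (integrableOn_Iic_comp_sub_right.2 (hfint (t - c j))).const_mul (p j)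
  have hforcing : h = fun x => f x - ∑ j, p j * f (x - c j) :=
    funext fun x => eq_sub_of_add_eq' (hf.eq x).symm
  rw [hforcing, integral_sub (hfint t) (integrable_finsetSum _ fun j _ => hterm j),
    integral_finsetSum _ fun j _ => hterm j]
  simp only [integral_const_mul, setIntegral_Iic_comp_sub_right,
    ← intervalIntegral.integral_Iic_sub_Iic (hfint _) (hfint _), mul_sub, Finset.sum_sub_distrib,
    ← Finset.sum_mul, hf.sum_weight, one_mul]

theorem mul_mean_le_setIntegral (hf : IsRenewalSolution c p h f)
    (hfint : ∀ t, IntegrableOn f (Iic t)) {K : ℝ} (hK : ∀ j, c j ≤ K) {κ T : ℝ}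
    (hκ : ∀ x ∈ Icc (T - K) T, κ ≤ f x) : κ * ∑ j, p j * c j ≤ ∫ x in Iic T, h x := by
  rw [← hf.sum_mul_intervalIntegral hfint, Finset.mul_sum]
  refine Finset.sum_le_sum fun j _ => ?_
  have hle : ∫ _ in (T - c j)..T, κ ≤ ∫ x in (T - c j)..T, f x := by
    refine intervalIntegral.integral_mono_on (by linarith [hf.step_pos j])
      intervalIntegrable_const ?_ fun x hx => hκ x ⟨by linarith [hx.1, hK j], hx.2⟩
    exact intervalIntegrable_iff.2 ((hfint _).mono_set fun x hx => hx.2)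
  rw [intervalIntegral.integral_const, sub_sub_cancel, smul_eq_mul] at hle
  linarith [mul_le_mul_of_nonneg_left hle (hf.weight_pos j).le]

theorem limsup_le (hf : IsRenewalSolution c p h f) (hh : Tendsto h atTop (𝓝 0))
    (hhint : Integrable h) (hfint : ∀ t, IntegrableOn f (Iic t))
    (hdense : Dense (AddSubgroup.closure (range c) : Set ℝ)) (hinc : HasSmallIncrements f)
    (habove : IsBoundedUnder (· ≤ ·) atTop f) (hbelow : IsBoundedUnder (· ≥ ·) atTop f) :
    limsup f atTop ≤ (∫ t, h t) / ∑ j, p j * c j := by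
  obtain ⟨K, hK⟩ := (finite_range c).bddAbove
  refine le_of_forall_lt_imp_le_of_dense fun b hb => (le_div_iff₀ hf.mean_pos).2 ?_
  have hmass : Tendsto (fun T => ∫ x in Iic T, h x) atTop (𝓝 (∫ x, h x)) :=
    (aecover_Iic tendsto_id).integral_tendsto_of_countably_generated hhint
  refine ge_of_tendsto_of_frequently hmass ?_
  exact (hf.frequently_forall_Icc_le hh hdense hinc habove hbelow hb K).mono fun T hT =>
    hf.mul_mean_le_setIntegral hfint (fun j => hK (mem_range_self j)) hT

end IsRenewalSolution

theorem le_exp_mul_of_antitone_exp_mul {θ : ℝ} (hθ : 0 ≤ θ) (hf0 : ∀ t, 0 ≤ f t)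
    (hanti : Antitone fun t => Real.exp (-(θ * t)) * f t) {x y δ : ℝ} (hyx : y ≤ x)
    (hxy : x ≤ y + δ) : f x ≤ Real.exp (θ * δ) * f y :=
  calc f x = Real.exp (θ * x) * (Real.exp (-(θ * x)) * f x) := by
        rw [← mul_assoc, ← Real.exp_add, add_neg_cancel, Real.exp_zero, one_mul]
    _ ≤ Real.exp (θ * x) * (Real.exp (-(θ * y)) * f y) :=
        mul_le_mul_of_nonneg_left (hanti hyx) (Real.exp_pos _).le
    _ = Real.exp (θ * (x - y)) * f y := by rw [← mul_assoc, ← Real.exp_add]; ring_nf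
    _ ≤ Real.exp (θ * δ) * f y := by
        have := hf0 y
        gcongr
        linarith

theorem exists_pos_forall_le_add {θ : ℝ} (hθ : 0 ≤ θ) (hf0 : ∀ t, 0 ≤ f t)
    (hanti : Antitone fun t => Real.exp (-(θ * t)) * f t) {M : ℝ} (hM : ∀ t, f t ≤ M)
    {η : ℝ} (hη : 0 < η) :
    ∃ δ > 0, ∀ x, ∀ u ∈ Ioo 0 δ, f (x + u) ≤ f x + η := by
  have hcont : Continuous fun δ : ℝ => (Real.exp (θ * δ) - 1) * M := by fun_prop
  have hsmall : ∀ᶠ δ in 𝓝[>] (0 : ℝ), (Real.exp (θ * δ) - 1) * M < η :=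
    (hcont.tendsto 0).mono_left nhdsWithin_le_nhds |>.eventually (gt_mem_nhds (by simpa using hη))
  obtain ⟨δ, hδη, hδ⟩ := (hsmall.and self_mem_nhdsWithin).exists
  refine ⟨δ, hδ, fun x u hu => ?_⟩
  have hexp : 0 ≤ Real.exp (θ * δ) - 1 :=
    sub_nonneg.2 (Real.one_le_exp (mul_nonneg hθ (le_of_lt hδ)))
  have hgrowth := le_exp_mul_of_antitone_exp_mul hθ hf0 hanti (x := x + u) (y := x) (δ := δ)
    (by linarith [hu.1]) (by linarith [hu.2])
  linarith [mul_le_mul_of_nonneg_left (hM x) hexp]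

theorem hasSmallIncrements_of_antitone_exp_mul {θ : ℝ} (hθ : 0 ≤ θ) (hf0 : ∀ t, 0 ≤ f t)
    (hanti : Antitone fun t => Real.exp (-(θ * t)) * f t) {M : ℝ} (hM : ∀ t, f t ≤ M) :
    HasSmallIncrements f := fun _ hη =>
  have ⟨δ, hδ, hinc⟩ := exists_pos_forall_le_add hθ hf0 hanti hM hη
  ⟨Ioo 0 δ, isOpen_Ioo, nonempty_Ioo.2 hδ, hinc⟩

theorem hasSmallIncrements_neg_of_antitone_exp_mul {θ : ℝ} (hθ : 0 ≤ θ) (hf0 : ∀ t, 0 ≤ f t)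
    (hanti : Antitone fun t => Real.exp (-(θ * t)) * f t) {M : ℝ} (hM : ∀ t, f t ≤ M) :
    HasSmallIncrements (-f) := fun _ hη => by
  obtain ⟨δ, hδ, hinc⟩ := exists_pos_forall_le_add hθ hf0 hanti hM hη
  refine ⟨Ioo (-δ) 0, isOpen_Ioo, nonempty_Ioo.2 (neg_lt_zero.2 hδ), fun x u hu => ?_⟩
  have hle := hinc (x + u) (-u) ⟨neg_pos.2 hu.2, neg_lt.1 hu.1⟩
  rw [add_neg_cancel_right] at hle
  simp only [Pi.neg_apply]
  linarith

namespace IsRenewalSolution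

theorem exists_forall_le (hf : IsRenewalSolution c p h f) (hhint : Integrable h)
    (hfint : ∀ t, IntegrableOn f (Iic t)) {θ : ℝ} (hθ : 0 ≤ θ) (hf0 : ∀ t, 0 ≤ f t)
    (hanti : Antitone fun t => Real.exp (-(θ * t)) * f t) : ∃ M, ∀ t, f t ≤ M := by
  obtain ⟨K, hK⟩ := (finite_range c).bddAbove
  refine ⟨(∫ x, ‖h x‖) / (∑ j, p j * c j) * Real.exp (θ * K), fun t => ?_⟩
  rw [← div_le_iff₀ (Real.exp_pos _), le_div_iff₀ hf.mean_pos]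
  have hwindow : ∀ x ∈ Icc (t - K) t, f t / Real.exp (θ * K) ≤ f x := fun x hx =>
    (div_le_iff₀' (Real.exp_pos _)).2
      (le_exp_mul_of_antitone_exp_mul hθ hf0 hanti hx.2 (by linarith [hx.1]))
  calc f t / Real.exp (θ * K) * ∑ j, p j * c j
      ≤ ∫ x in Iic t, h x :=
        hf.mul_mean_le_setIntegral hfint (fun j => hK (mem_range_self j)) hwindow
    _ ≤ ∫ x in Iic t, ‖h x‖ :=
        integral_mono hhint.integrableOn hhint.norm.integrableOn fun x => Real.le_norm_self _
    _ ≤ ∫ x, ‖h x‖ :=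
        setIntegral_le_integral hhint.norm (Eventually.of_forall fun x => norm_nonneg _)

theorem tendsto (hf : IsRenewalSolution c p h f) (hh : Tendsto h atTop (𝓝 0))
    (hhint : Integrable h) (hfint : ∀ t, IntegrableOn f (Iic t)) (hf0 : ∀ t, 0 ≤ f t)
    {θ : ℝ} (hθ : 0 ≤ θ) (hanti : Antitone fun t => Real.exp (-(θ * t)) * f t)
    (hdense : Dense (AddSubgroup.closure (range c) : Set ℝ)) :
    Tendsto f atTop (𝓝 ((∫ t, h t) / ∑ j, p j * c j)) := by
  obtain ⟨M, hM⟩ := hf.exists_forall_le hhint hfint hθ hf0 hanti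
  have habove : IsBoundedUnder (· ≤ ·) atTop f := isBoundedUnder_of ⟨M, hM⟩
  have hbelow : IsBoundedUnder (· ≥ ·) atTop f := isBoundedUnder_of ⟨0, hf0⟩
  have hnegAbove : IsBoundedUnder (· ≤ ·) atTop (-f) :=
    isBoundedUnder_of ⟨0, fun t => neg_nonpos.2 (hf0 t)⟩
  have hnegBelow : IsBoundedUnder (· ≥ ·) atTop (-f) :=
    isBoundedUnder_of ⟨-M, fun t => neg_le_neg (hM t)⟩
  have hupper := hf.limsup_le hh hhint hfint hdense
    (hasSmallIncrements_of_antitone_exp_mul hθ hf0 hanti hM) habove hbelow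
  have hlower := hf.neg.limsup_le (by simpa using! hh.neg) hhint.neg (fun t => (hfint t).neg) hdense
    (hasSmallIncrements_neg_of_antitone_exp_mul hθ hf0 hanti hM) hnegAbove hnegBelow
  simp only [Pi.neg_apply, integral_neg, neg_div] at hlower
  refine tendsto_order.2 ⟨fun b hb => ?_, fun b hb => ?_⟩
  · exact (eventually_lt_of_limsup_lt (hlower.trans_lt (neg_lt_neg hb)) hnegAbove).mono
      fun t ht => neg_lt_neg_iff.1 ht
  · exact eventually_lt_of_limsup_lt (hupper.trans_lt hb) habove

end IsRenewalSolution

end Renewal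

section Thickening

theorem infEDist_inter_uIcc {F : Set ℝ} {a b x : ℝ} (ha : a ∈ F) (hb : b ∈ F)
    (hx : x ∈ uIcc a b) : Metric.infEDist x (F ∩ uIcc a b) = Metric.infEDist x F := by
  wlog hab : a ≤ b generalizing a b
  · rw [uIcc_comm]
    exact this hb ha (uIcc_comm a b ▸ hx) (le_of_not_ge hab)
  rw [uIcc_of_le hab] at hx ⊢
  refine le_antisymm (Metric.le_infEDist.2 fun y hy => ?_) (Metric.infEDist_anti inter_subset_left)
  obtain ⟨z, hz, hzy⟩ : ∃ z ∈ F ∩ Icc a b, dist x z ≤ dist x y := by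
    rcases lt_or_ge y a with hya | hay
    · refine ⟨a, ⟨ha, left_mem_Icc.2 hab⟩, ?_⟩
      rw [Real.dist_eq, Real.dist_eq, abs_of_nonneg, abs_of_nonneg] <;> linarith [hx.1]
    · rcases le_or_gt y b with hyb | hby
      · exact ⟨y, ⟨hy, hay, hyb⟩, le_rfl⟩
      · refine ⟨b, ⟨hb, right_mem_Icc.2 hab⟩, ?_⟩
        rw [Real.dist_eq, Real.dist_eq, abs_of_nonpos, abs_of_nonpos] <;> linarith [hx.2]
  refine (Metric.infEDist_le_edist_of_mem hz).trans ?_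
  rw [edist_dist, edist_dist]
  exact ENNReal.ofReal_le_ofReal hzy

theorem cthickening_inter_uIcc {F : Set ℝ} {a b : ℝ} (ha : a ∈ F) (hb : b ∈ F) (ε : ℝ) :
    Metric.cthickening ε F ∩ uIcc a b = Metric.cthickening ε (F ∩ uIcc a b) ∩ uIcc a b := by
  ext x
  refine and_congr_left fun hx => ?_
  rw [Metric.mem_cthickening_iff, Metric.mem_cthickening_iff, infEDist_inter_uIcc ha hb hx]

theorem cthickening_Icc {A B ε : ℝ} (hAB : A ≤ B) (hε : 0 ≤ ε) :
    Metric.cthickening ε (Icc A B) = Icc (A - ε) (B + ε) := by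
  rw [Real.Icc_eq_closedBall, Real.Icc_eq_closedBall,
    cthickening_closedBall hε (by linarith)]
  congr 1 <;> ring

theorem Ioo_sdiff_cthickening_pair {a b ε : ℝ} (hε : 0 ≤ ε) :
    Ioo a b \ Metric.cthickening ε {a, b} = Ioo (a + ε) (b - ε) := by
  ext x
  simp only [insert_eq, Metric.cthickening_union, Metric.cthickening_singleton _ hε,
    Real.closedBall_eq_Icc, Set.mem_sdiff, mem_union, mem_Icc, mem_Ioo]
  grind

theorem volume_real_cthickening_inter_Ioo {F : Set ℝ} {a b ε : ℝ} (hab : a ≤ b)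
    (hF : F ∩ Icc a b = {a, b}) (hε : 0 ≤ ε) :
    volume.real (Metric.cthickening ε F ∩ Ioo a b) = min (2 * ε) (b - a) := by
  have ha : a ∈ F := (hF.symm ▸ mem_insert a {b} : a ∈ F ∩ Icc a b).1
  have hb : b ∈ F := (hF.symm ▸ mem_insert_of_mem a rfl : b ∈ F ∩ Icc a b).1
  have hlocal : Metric.cthickening ε F ∩ Ioo a b = Ioo a b ∩ Metric.cthickening ε {a, b} := by
    have hIcc := cthickening_inter_uIcc ha hb ε
    rw [uIcc_of_le hab, hF] at hIcc
    rw [← inter_eq_right.2 (Ioo_subset_Icc_self (a := a) (b := b)), ← inter_assoc, hIcc,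
      inter_assoc, inter_comm, inter_eq_right.2 Ioo_subset_Icc_self]
  have hsplit := measureReal_inter_add_sdiff (μ := volume) (s := Ioo a b)
    (Metric.isClosed_cthickening (δ := ε) (E := {a, b})).measurableSet (by simp)
  rw [Ioo_sdiff_cthickening_pair hε, Real.volume_real_Ioo, Real.volume_real_Ioo_of_le hab] at hsplit
  rw [hlocal]
  grind

theorem volume_real_cthickening_le_add {F : Set ℝ} {A B ε : ℝ} (hAB : A ≤ B) (hF : F ⊆ Icc A B)
    (hε : 0 ≤ ε) :
    volume.real (Metric.cthickening ε F) ≤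
      volume.real (Metric.cthickening ε F ∩ Icc A B) + 2 * ε := by
  have hsub : Metric.cthickening ε F ⊆ Icc (A - ε) (B + ε) :=
    cthickening_Icc hAB hε ▸ Metric.cthickening_subset_of_subset ε hF
  have hsplit := measureReal_inter_add_sdiff (μ := volume) (s := Metric.cthickening ε F)
    (measurableSet_Icc (a := A) (b := B)) (measure_ne_top_of_subset hsub (by simp))
  have hcollar : volume.real (Icc (A - ε) (B + ε) \ Icc A B) = 2 * ε := by
    rw [measureReal_sdiff (Icc_subset_Icc (by linarith) (by linarith)) measurableSet_Icc (by simp),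
      Real.volume_real_Icc_of_le (by linarith), Real.volume_real_Icc_of_le hAB]
    ring
  have houter := measureReal_mono (μ := volume) (sdiff_subset_sdiff_left (t := Icc A B) hsub)
    (measure_ne_top_of_subset sdiff_subset (by simp))
  linarith

end Thickening

section Similitude

theorem edist_eq_ofReal_mul_of_dist_eq_mul {X Y : Type*} [PseudoMetricSpace X] [PseudoMetricSpace Y]
    {φ : X → Y} {r : ℝ} (hr : 0 ≤ r) (hφ : ∀ x y, dist (φ x) (φ y) = r * dist x y) (x y : X) :
    edist (φ x) (φ y) = ENNReal.ofReal r * edist x y := by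
  rw [edist_dist, edist_dist, hφ, ENNReal.ofReal_mul hr]

theorem preimage_cthickening_image_of_dist_eq_mul {X Y : Type*} [PseudoMetricSpace X]
    [PseudoMetricSpace Y] {φ : X → Y} {r : ℝ} (hr : 0 < r)
    (hφ : ∀ x y, dist (φ x) (φ y) = r * dist x y) (ε : ℝ) (F : Set X) :
    φ ⁻¹' Metric.cthickening ε (φ '' F) = Metric.cthickening (ε / r) F := by
  ext x
  have hr0 : ENNReal.ofReal r ≠ 0 := by simpa using hr
  have hinf : Metric.infEDist (φ x) (φ '' F) = ENNReal.ofReal r * Metric.infEDist x F := by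
    simp only [Metric.infEDist, iInf_image, edist_eq_ofReal_mul_of_dist_eq_mul hr.le hφ,
      ENNReal.mul_iInf_of_ne hr0 ENNReal.ofReal_ne_top]
  rw [mem_preimage, Metric.mem_cthickening_iff, Metric.mem_cthickening_iff, hinf,
    ENNReal.ofReal_div_of_pos hr, ENNReal.le_div_iff_mul_le (.inl hr0) (.inl ENNReal.ofReal_ne_top),
    mul_comm]

theorem hausdorffMeasure_image_of_dist_eq_mul {X Y : Type*} [MetricSpace X] [MeasurableSpace X]
    [BorelSpace X] [MetricSpace Y] [MeasurableSpace Y] [BorelSpace Y] {φ : X → Y} {r : ℝ}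
    (hr : 0 < r) (hφ : ∀ x y, dist (φ x) (φ y) = r * dist x y) {d : ℝ} (hd : 0 ≤ d) (s : Set X) :
    μH[d] (φ '' s) = ENNReal.ofReal r ^ d * μH[d] s := by
  lift r to NNReal using hr.le
  have hr0 : r ≠ 0 := by simpa using hr.ne'
  have hlip : LipschitzWith r φ := .of_dist_le_mul fun x y => (hφ x y).le
  have hanti : AntilipschitzWith r⁻¹ φ := .of_le_mul_dist fun x y => by
    rw [hφ, NNReal.coe_inv, inv_mul_cancel_left₀ hr.ne']
  have hlower := hanti.le_hausdorffMeasure_image hd s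
  rw [ENNReal.ofReal_coe_nnreal]
  refine (hlip.hausdorffMeasure_image_le hd s).antisymm ?_
  rw [ENNReal.coe_inv hr0, ENNReal.inv_rpow] at hlower
  rwa [mul_comm, ← ENNReal.le_div_iff_mul_le, ENNReal.div_eq_inv_mul] <;> simp [hr0]

theorem exists_affineMap_coe_eq_of_dist_eq_mul {E E' : Type*} [NormedAddCommGroup E]
    [NormedSpace ℝ E] [NormedAddCommGroup E'] [NormedSpace ℝ E'] [StrictConvexSpace ℝ E']
    {φ : E → E'} {r : ℝ} (hr : 0 < r) (hφ : ∀ x y, dist (φ x) (φ y) = r * dist x y) :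
    ∃ L : E →ᵃ[ℝ] E', ⇑L = φ := by
  have hiso : Isometry fun x => r⁻¹ • φ x := Isometry.of_dist_eq fun x y => by
    rw [dist_smul₀, hφ, Real.norm_of_nonneg (by positivity), inv_mul_cancel_left₀ hr.ne']
  refine ⟨r • hiso.affineIsometryOfStrictConvexSpace.toAffineMap, funext fun x => ?_⟩
  simp [hr.ne']

variable {φ : ℝ → ℝ} {r : ℝ}

theorem volume_real_image_of_dist_eq_mul (hr : 0 < r)
    (hφ : ∀ x y, dist (φ x) (φ y) = r * dist x y) (s : Set ℝ) :
    volume.real (φ '' s) = r * volume.real s := by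
  rw [← hausdorffMeasure_real, measureReal_def,
    hausdorffMeasure_image_of_dist_eq_mul hr hφ one_pos.le]
  simp [hr.le, measureReal_def]

theorem image_Icc_eq_uIcc_of_dist_eq_mul (hr : 0 < r)
    (hφ : ∀ x y, dist (φ x) (φ y) = r * dist x y) {A B : ℝ} (hAB : A ≤ B) :
    φ '' Icc A B = uIcc (φ A) (φ B) := by
  obtain ⟨L, rfl⟩ := exists_affineMap_coe_eq_of_dist_eq_mul hr hφ
  rw [← segment_eq_Icc hAB, image_segment, segment_eq_uIcc]

theorem isOpen_image_Ioo_of_dist_eq_mul (hr : 0 < r)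
    (hφ : ∀ x y, dist (φ x) (φ y) = r * dist x y) (A B : ℝ) : IsOpen (φ '' Ioo A B) := by
  rcases le_or_gt B A with hBA | hAB
  · simp [hBA]
  obtain ⟨L, rfl⟩ := exists_affineMap_coe_eq_of_dist_eq_mul hr hφ
  have hne : L A ≠ L B := by
    rw [← dist_pos, hφ]
    exact mul_pos hr (dist_pos.2 hAB.ne)
  rw [← openSegment_eq_Ioo hAB, image_openSegment, openSegment_eq_Ioo' hne]
  exact isOpen_Ioo

theorem continuous_of_dist_eq_mul (hr : 0 ≤ r)
    (hφ : ∀ x y, dist (φ x) (φ y) = r * dist x y) : Continuous φ :=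
  (LipschitzWith.of_dist_le_mul (K := r.toNNReal) fun x y => by
    rw [hφ, Real.coe_toNNReal r hr]).continuous

end Similitude

section GapSystem

/-- `F` is invariant under the similitudes `φ j` of `ℝ` with ratios `r j`, has convex hull `[A, B]`
(encoded by the three fields `left_mem`, `right_mem`, `subset_Icc`), satisfies the open set
condition on `(A, B)`, and the first-level pieces `φ j '' [A, B]` leave the gaps `(a q, b q)`. -/
structure IsSelfSimilarWithGaps {ι κ : Type*} (φ : ι → ℝ → ℝ) (r : ι → ℝ) (F : Set ℝ) (A B : ℝ)
    (a b : κ → ℝ) : Prop where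
  ratio_pos : ∀ j, 0 < r j
  dist_eq : ∀ j x y, dist (φ j x) (φ j y) = r j * dist x y
  eq_iUnion_image : F = ⋃ j, φ j '' F
  left_mem : A ∈ F
  right_mem : B ∈ F
  subset_Icc : F ⊆ Icc A B
  disjoint_image : Pairwise (Disjoint on fun j => φ j '' Ioo A B)
  gap_lt : ∀ q, a q < b q
  disjoint_gap : Pairwise (Disjoint on fun q => Ioo (a q) (b q))
  sdiff_eq_iUnion_gap : Icc A B \ ⋃ j, φ j '' Icc A B = ⋃ q, Ioo (a q) (b q)

namespace IsSelfSimilarWithGaps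

variable {ι κ : Type*} {φ : ι → ℝ → ℝ} {r : ι → ℝ} {F : Set ℝ} {A B : ℝ} {a b : κ → ℝ}

theorem le (hF : IsSelfSimilarWithGaps φ r F A B a b) : A ≤ B :=
  (hF.subset_Icc hF.left_mem).2

theorem image_subset (hF : IsSelfSimilarWithGaps φ r F A B a b) (j : ι) : φ j '' F ⊆ F := by
  conv_rhs => rw [hF.eq_iUnion_image]
  exact subset_iUnion (fun j => φ j '' F) j

theorem image_Icc_eq (hF : IsSelfSimilarWithGaps φ r F A B a b) (j : ι) :
    φ j '' Icc A B = uIcc (φ j A) (φ j B) :=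
  image_Icc_eq_uIcc_of_dist_eq_mul (hF.ratio_pos j) (hF.dist_eq j) hF.le

theorem isClosed_image_Icc (hF : IsSelfSimilarWithGaps φ r F A B a b) (j : ι) :
    IsClosed (φ j '' Icc A B) :=
  hF.image_Icc_eq j ▸ isClosed_Icc

theorem isOpen_image_Ioo (hF : IsSelfSimilarWithGaps φ r F A B a b) (j : ι) :
    IsOpen (φ j '' Ioo A B) :=
  isOpen_image_Ioo_of_dist_eq_mul (hF.ratio_pos j) (hF.dist_eq j) A B

theorem image_Icc_subset (hF : IsSelfSimilarWithGaps φ r F A B a b) (j : ι) :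
    φ j '' Icc A B ⊆ Icc A B := by
  have hmem {x : ℝ} (hx : x ∈ F) : φ j x ∈ Icc A B :=
    hF.subset_Icc (hF.image_subset j (mem_image_of_mem _ hx))
  rw [hF.image_Icc_eq]
  exact uIcc_subset_Icc (hmem hF.left_mem) (hmem hF.right_mem)

theorem subset_iUnion_image_Icc (hF : IsSelfSimilarWithGaps φ r F A B a b) :
    F ⊆ ⋃ j, φ j '' Icc A B := by
  rw [hF.eq_iUnion_image]
  exact iUnion_mono fun j => image_mono hF.subset_Icc

theorem disjoint_image_Ioo_image_Icc (hF : IsSelfSimilarWithGaps φ r F A B a b) {j k : ι}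
    (hjk : j ≠ k) : Disjoint (φ j '' Ioo A B) (φ k '' Icc A B) := by
  rcases hF.le.eq_or_lt with rfl | hAB
  · simp
  rw [← closure_Ioo hAB.ne]
  exact ((hF.disjoint_image hjk).closure_right (hF.isOpen_image_Ioo j)).mono_right
    (image_closure_subset_closure_image
      (continuous_of_dist_eq_mul (hF.ratio_pos k).le (hF.dist_eq k)))

theorem mem_image_of_mem_image_Icc (hF : IsSelfSimilarWithGaps φ r F A B a b) {j : ι} {x : ℝ}
    (hx : x ∈ φ j '' Icc A B) (hxj : x ∉ φ j '' Ioo A B) : x ∈ φ j '' F := by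
  obtain ⟨y, hy, rfl⟩ := hx
  refine mem_image_of_mem _ ?_
  rcases eq_endpoints_or_mem_Ioo_of_mem_Icc hy with rfl | rfl | hyAB
  · exact hF.left_mem
  · exact hF.right_mem
  · exact absurd (mem_image_of_mem _ hyAB) hxj

theorem inter_image_Icc (hF : IsSelfSimilarWithGaps φ r F A B a b) (j : ι) :
    F ∩ φ j '' Icc A B = φ j '' F := by
  refine Subset.antisymm (fun x hx => ?_)
    (subset_inter (hF.image_subset j) (image_mono hF.subset_Icc))
  obtain ⟨k, hxk⟩ := mem_iUnion.1 (hF.eq_iUnion_image ▸ hx.1 : x ∈ ⋃ k, φ k '' F)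
  by_contra hxj
  have hxIoo : x ∈ φ j '' Ioo A B := by
    by_contra hxIoo
    exact hxj (hF.mem_image_of_mem_image_Icc hx.2 hxIoo)
  have hjk : j ≠ k := fun hjk => hxj (hjk ▸ hxk)
  exact (hF.disjoint_image_Ioo_image_Icc hjk).notMem_of_mem_left hxIoo
    (image_mono hF.subset_Icc hxk)

theorem disjoint_gap_image_Icc (hF : IsSelfSimilarWithGaps φ r F A B a b) (q : κ) (j : ι) :
    Disjoint (Ioo (a q) (b q)) (φ j '' Icc A B) := by
  have hgap : Ioo (a q) (b q) ⊆ Icc A B \ ⋃ j, φ j '' Icc A B :=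
    hF.sdiff_eq_iUnion_gap ▸ subset_iUnion (fun q => Ioo (a q) (b q)) q
  exact (disjoint_sdiff_left.mono_left hgap).mono_right
    (subset_iUnion (fun j => φ j '' Icc A B) j)

theorem disjoint_gap_self (hF : IsSelfSimilarWithGaps φ r F A B a b) (q : κ) :
    Disjoint (Ioo (a q) (b q)) F :=
  (disjoint_iUnion_right.2 (hF.disjoint_gap_image_Icc q)).mono_right hF.subset_iUnion_image_Icc

/- A boundary point of a gap lies in no gap, hence in some `φ j '' [A, B]`, and not in the open set
`φ j '' (A, B)`, which misses the gap. -/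
theorem frontier_gap_subset (hF : IsSelfSimilarWithGaps φ r F A B a b) (q : κ) :
    frontier (Ioo (a q) (b q)) ⊆ F := by
  rw [isOpen_Ioo.frontier_eq]
  rintro x ⟨hxcl, hxq⟩
  have hxgap (q' : κ) : x ∉ Ioo (a q') (b q') := by
    rcases eq_or_ne q q' with rfl | hqq'
    · exact hxq
    · exact ((hF.disjoint_gap hqq').closure_left isOpen_Ioo).notMem_of_mem_left hxcl
  have hxAB : x ∈ Icc A B := closure_minimal (((subset_iUnion _ q).trans_eq
    hF.sdiff_eq_iUnion_gap.symm).trans sdiff_subset) isClosed_Icc hxcl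
  have hxpiece : x ∈ ⋃ j, φ j '' Icc A B := by
    by_contra hx
    have hx' : x ∈ Icc A B \ ⋃ j, φ j '' Icc A B := ⟨hxAB, hx⟩
    rw [hF.sdiff_eq_iUnion_gap, mem_iUnion] at hx'
    exact hx'.elim hxgap
  obtain ⟨j, hxj⟩ := mem_iUnion.1 hxpiece
  refine hF.image_subset j (hF.mem_image_of_mem_image_Icc hxj ?_)
  exact (((hF.disjoint_gap_image_Icc q j).mono_right (image_mono Ioo_subset_Icc_self)).closure_left
    (hF.isOpen_image_Ioo j)).notMem_of_mem_left hxcl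

theorem inter_Icc_gap (hF : IsSelfSimilarWithGaps φ r F A B a b) (q : κ) :
    F ∩ Icc (a q) (b q) = {a q, b q} := by
  have hfront := hF.frontier_gap_subset q
  rw [frontier_Ioo (hF.gap_lt q)] at hfront
  rw [← Ioo_union_both (hF.gap_lt q).le, inter_union_distrib_left,
    (hF.disjoint_gap_self q).symm.inter_eq, empty_union, inter_eq_right.2 hfront]

theorem volume_real_cthickening_inter_gap (hF : IsSelfSimilarWithGaps φ r F A B a b) (q : κ)
    {ε : ℝ} (hε : 0 ≤ ε) :
    volume.real (Metric.cthickening ε F ∩ Ioo (a q) (b q)) = min (2 * ε) (b q - a q) :=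
  volume_real_cthickening_inter_Ioo (hF.gap_lt q).le (hF.inter_Icc_gap q) hε

theorem volume_real_cthickening_inter_image_Icc (hF : IsSelfSimilarWithGaps φ r F A B a b) (j : ι)
    (ε : ℝ) : volume.real (Metric.cthickening ε F ∩ φ j '' Icc A B) =
      r j * volume.real (Metric.cthickening (ε / r j) F ∩ Icc A B) := by
  have hlocal : Metric.cthickening ε F ∩ φ j '' Icc A B =
      Metric.cthickening ε (φ j '' F) ∩ φ j '' Icc A B := by
    have hends := cthickening_inter_uIcc (hF.image_subset j (mem_image_of_mem _ hF.left_mem))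
      (hF.image_subset j (mem_image_of_mem _ hF.right_mem)) ε
    rwa [← hF.image_Icc_eq j, hF.inter_image_Icc j] at hends
  rw [hlocal, inter_comm, ← image_inter_preimage,
    preimage_cthickening_image_of_dist_eq_mul (hF.ratio_pos j) (hF.dist_eq j), inter_comm,
    volume_real_image_of_dist_eq_mul (hF.ratio_pos j) (hF.dist_eq j)]

theorem aedisjoint_image_Icc (hF : IsSelfSimilarWithGaps φ r F A B a b) :
    Pairwise (AEDisjoint volume on fun j => φ j '' Icc A B) := fun j k hjk => by
  have hsub : φ j '' Icc A B ∩ φ k '' Icc A B ⊆ φ j '' {A, B} := by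
    rintro x ⟨⟨y, hy, rfl⟩, hxk⟩
    refine mem_image_of_mem _ ?_
    rw [← Icc_sdiff_Ioo_same hF.le]
    exact ⟨hy, fun hyAB => (hF.disjoint_image_Ioo_image_Icc hjk).notMem_of_mem_left
      (mem_image_of_mem _ hyAB) hxk⟩
  exact measure_mono_null hsub (((toFinite {A, B}).image (φ j)).measure_zero volume)

theorem volume_real_cthickening_inter_Icc [Fintype ι] [Fintype κ]
    (hF : IsSelfSimilarWithGaps φ r F A B a b) {ε : ℝ} (hε : 0 ≤ ε) :
    volume.real (Metric.cthickening ε F ∩ Icc A B) =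
      ∑ j, r j * volume.real (Metric.cthickening (ε / r j) F ∩ Icc A B) +
        ∑ q, min (2 * ε) (b q - a q) := by
  have hthick : MeasurableSet (Metric.cthickening ε F) := Metric.isClosed_cthickening.measurableSet
  have hpiece (j : ι) : MeasurableSet (φ j '' Icc A B) := (hF.isClosed_image_Icc j).measurableSet
  have hpieces : volume.real (Metric.cthickening ε F ∩ ⋃ j, φ j '' Icc A B) =
      ∑ j, r j * volume.real (Metric.cthickening (ε / r j) F ∩ Icc A B) := by
    simp only [← hF.volume_real_cthickening_inter_image_Icc, inter_iUnion]
    simpa using measureReal_biUnion_finset₀ (μ := volume) (s := Finset.univ)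
      (f := fun j => Metric.cthickening ε F ∩ φ j '' Icc A B)
      (fun j _ k _ hjk => (hF.aedisjoint_image_Icc hjk).mono inter_subset_right inter_subset_right)
      (fun j _ => (hthick.inter (hpiece j)).nullMeasurableSet)
      (fun j _ => measure_ne_top_of_subset (inter_subset_right.trans (hF.image_Icc_subset j))
        (by simp))
  have hgaps : volume.real (Metric.cthickening ε F ∩ ⋃ q, Ioo (a q) (b q)) =
      ∑ q, min (2 * ε) (b q - a q) := by
    simp only [← hF.volume_real_cthickening_inter_gap _ hε, inter_iUnion]
    exact measureReal_iUnion_fintype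
      (fun q q' hqq' => (hF.disjoint_gap hqq').mono inter_subset_right inter_subset_right)
      (fun q => hthick.inter measurableSet_Ioo)
      (fun q => measure_ne_top_of_subset inter_subset_right (by simp))
  rw [← hpieces, ← hgaps, ← hF.sdiff_eq_iUnion_gap, ← measureReal_inter_add_sdiff
    (MeasurableSet.iUnion hpiece) (measure_ne_top_of_subset inter_subset_right (by simp)),
    inter_assoc, inter_eq_right.2 (iUnion_subset hF.image_Icc_subset), inter_sdiff_assoc]

end IsSelfSimilarWithGaps

end GapSystem

section LogRescale

/-- The quantity `g ε * ε ^ (D - 1)`, whose limit as `ε → 0⁺` is the `D`-dimensional Minkowski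
content when `g ε` is the length of an `ε`-neighbourhood, in the coordinate `ε = exp (-t)`. -/
noncomputable def logRescale (D : ℝ) (g : ℝ → ℝ) (t : ℝ) : ℝ :=
  Real.exp ((1 - D) * t) * g (Real.exp (-t))

variable {D : ℝ} {g w : ℝ → ℝ}

theorem logRescale_neg_log (D : ℝ) (g : ℝ → ℝ) {ε : ℝ} (hε : 0 < ε) :
    logRescale D g (-Real.log ε) = g ε * ε ^ (D - 1) := by
  rw [logRescale, neg_neg, Real.exp_log hε, Real.rpow_def_of_pos hε, mul_comm]
  ring_nf

theorem logRescale_sum {κ : Type*} [Fintype κ] (D : ℝ) (w : κ → ℝ → ℝ) :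
    logRescale D (fun ε => ∑ q, w q ε) = fun t => ∑ q, logRescale D (w q) t :=
  funext fun _ => Finset.mul_sum _ _ _

theorem logRescale_nonneg (hg0 : ∀ ε, 0 ≤ g ε) (D t : ℝ) : 0 ≤ logRescale D g t :=
  mul_nonneg (Real.exp_pos _).le (hg0 _)

theorem antitone_exp_mul_logRescale (D : ℝ) (hg : Monotone g) :
    Antitone fun t => Real.exp (-((1 - D) * t)) * logRescale D g t := by
  have heq (t : ℝ) : Real.exp (-((1 - D) * t)) * logRescale D g t = g (Real.exp (-t)) := by
    rw [logRescale, ← mul_assoc, ← Real.exp_add, neg_add_cancel, Real.exp_zero, one_mul]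
  simp only [heq]
  exact fun s t hst => hg (Real.exp_le_exp.2 (neg_le_neg hst))

theorem integrableOn_Iic_logRescale (hD1 : D < 1) (hg : Monotone g) {M : ℝ}
    (hgM : ∀ ε, ‖g ε‖ ≤ M) (t : ℝ) : IntegrableOn (logRescale D g) (Iic t) := by
  have hmeas : Measurable (logRescale D g) :=
    Measurable.mul (by fun_prop) (hg.measurable.comp (by fun_prop))
  refine ((integrableOn_exp_mul_Iic (sub_pos.2 hD1) t).mul_const M).mono'
    hmeas.aestronglyMeasurable (Eventually.of_forall fun x => ?_)
  rw [logRescale, norm_mul, Real.norm_of_nonneg (Real.exp_pos _).le]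
  exact mul_le_mul_of_nonneg_left (hgM _) (Real.exp_pos _).le

theorem mul_logRescale_comp_div (D : ℝ) (g : ℝ → ℝ) {ρ : ℝ} (hρ : 0 < ρ) (t : ℝ) :
    logRescale D (fun ε => ρ * g (ε / ρ)) t = ρ ^ D * logRescale D g (t - Real.log ρ⁻¹) := by
  have hscale : Real.exp (-(t - Real.log ρ⁻¹)) = Real.exp (-t) / ρ := by
    rw [Real.log_inv, show -(t - -Real.log ρ) = -t - Real.log ρ by ring, Real.exp_sub,
      Real.exp_log hρ]
  have hweight : ρ ^ D * Real.exp ((1 - D) * (t - Real.log ρ⁻¹)) = Real.exp ((1 - D) * t) * ρ := by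
    nth_rewrite 3 [← Real.exp_log hρ]
    rw [Real.rpow_def_of_pos hρ, ← Real.exp_add, ← Real.exp_add, Real.log_inv]
    ring_nf
  rw [logRescale, logRescale, hscale, ← mul_assoc, ← mul_assoc, hweight]

theorem isRenewalSolution_logRescale {ι : Type*} [Fintype ι] {r : ι → ℝ} (hr0 : ∀ j, 0 < r j)
    (hr1 : ∀ j, r j < 1) (hD : ∑ j, r j ^ D = 1)
    (hgw : ∀ ε > 0, g ε = ∑ j, r j * g (ε / r j) + w ε) :
    IsRenewalSolution (fun j => Real.log (r j)⁻¹) (fun j => r j ^ D) (logRescale D w)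
      (logRescale D g) where
  step_pos j := Real.log_pos ((one_lt_inv₀ (hr0 j)).2 (hr1 j))
  weight_pos j := Real.rpow_pos_of_pos (hr0 j) D
  sum_weight := hD
  eq t := by
    simp only [← mul_logRescale_comp_div D g (hr0 _)]
    rw [logRescale, hgw _ (Real.exp_pos _), mul_add, Finset.mul_sum]
    rfl

theorem tendsto_mul_rpow_of_scaling {ι : Type*} [Fintype ι] {r : ι → ℝ} (hr0 : ∀ j, 0 < r j)
    (hr1 : ∀ j, r j < 1) (hD1 : D < 1) (hD : ∑ j, r j ^ D = 1)
    (hdense : Dense (AddSubgroup.closure (range fun j => Real.log (r j)) : Set ℝ))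
    (hg : Monotone g) (hg0 : ∀ ε, 0 ≤ g ε) {M : ℝ} (hgM : ∀ ε, g ε ≤ M)
    (hgw : ∀ ε > 0, g ε = ∑ j, r j * g (ε / r j) + w ε)
    (hwint : Integrable (logRescale D w)) (hw : Tendsto (logRescale D w) atTop (𝓝 0)) :
    Tendsto (fun ε => g ε * ε ^ (D - 1)) (𝓝[>] 0)
      (𝓝 ((∫ t, logRescale D w t) / ∑ j, r j ^ D * Real.log (r j)⁻¹)) := by
  have hsteps : Dense (AddSubgroup.closure (range fun j => Real.log (r j)⁻¹) : Set ℝ) := by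
    have hneg : (range fun j => Real.log (r j)⁻¹) = -range fun j => Real.log (r j) := by
      simp only [Real.log_inv, ← image_neg_eq_neg, ← range_comp, comp_def]
    rwa [hneg, AddSubgroup.closure_neg]
  have hlim := (isRenewalSolution_logRescale hr0 hr1 hD hgw).tendsto hw hwint
    (integrableOn_Iic_logRescale hD1 hg fun ε => by rw [Real.norm_of_nonneg (hg0 ε)]; exact hgM ε)
    (logRescale_nonneg hg0 D) (sub_pos.2 hD1).le (antitone_exp_mul_logRescale D hg) hsteps
  have hlog : Tendsto (fun ε : ℝ => -Real.log ε) (𝓝[>] 0) atTop :=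
    tendsto_neg_atBot_atTop.comp Real.tendsto_log_nhdsGT_zero
  refine (hlim.comp hlog).congr' ?_
  filter_upwards [self_mem_nhdsWithin] with ε hε using logRescale_neg_log D g hε

end LogRescale

section GapProfile

variable {D l : ℝ}

theorem eqOn_logRescale_min_Iic (D : ℝ) (hl : 0 < l) :
    EqOn (logRescale D fun ε => min (2 * ε) l) (fun t => l * Real.exp ((1 - D) * t))
      (Iic (Real.log (2 / l))) := fun t ht => by
  have hle : l / 2 ≤ Real.exp (-t) := by
    rw [← inv_div, Real.exp_neg]
    exact inv_anti₀ (Real.exp_pos t) ((Real.le_log_iff_exp_le (by positivity)).1 ht)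
  rw [logRescale, min_eq_right (by linarith), mul_comm]

theorem exp_mul_two_mul_exp_neg (D t : ℝ) :
    Real.exp ((1 - D) * t) * (2 * Real.exp (-t)) = 2 * Real.exp (-D * t) := by
  rw [mul_left_comm, ← Real.exp_add]
  ring_nf

theorem eqOn_logRescale_min_Ioi (D : ℝ) (hl : 0 < l) :
    EqOn (logRescale D fun ε => min (2 * ε) l) (fun t => 2 * Real.exp (-D * t))
      (Ioi (Real.log (2 / l))) := fun t ht => by
  have hle : Real.exp (-t) ≤ l / 2 := by
    rw [← inv_div, Real.exp_neg]
    exact inv_anti₀ (by positivity) ((Real.log_lt_iff_lt_exp (by positivity)).1 ht).le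
  rw [logRescale, min_eq_left (by linarith), exp_mul_two_mul_exp_neg]

theorem integrableOn_Iic_logRescale_min (hD1 : D < 1) (hl : 0 < l) :
    IntegrableOn (logRescale D fun ε => min (2 * ε) l) (Iic (Real.log (2 / l))) :=
  IntegrableOn.congr_fun ((integrableOn_exp_mul_Iic (sub_pos.2 hD1) _).const_mul l)
    (eqOn_logRescale_min_Iic D hl).symm measurableSet_Iic

theorem integrableOn_Ioi_logRescale_min (hD0 : 0 < D) (hl : 0 < l) :
    IntegrableOn (logRescale D fun ε => min (2 * ε) l) (Ioi (Real.log (2 / l))) :=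
  IntegrableOn.congr_fun ((integrableOn_exp_mul_Ioi (neg_lt_zero.2 hD0) _).const_mul 2)
    (eqOn_logRescale_min_Ioi D hl).symm measurableSet_Ioi

theorem integrable_logRescale_min (hD0 : 0 < D) (hD1 : D < 1) (hl : 0 < l) :
    Integrable (logRescale D fun ε => min (2 * ε) l) := by
  rw [← integrableOn_univ, ← Iic_union_Ioi (a := Real.log (2 / l))]
  exact (integrableOn_Iic_logRescale_min hD1 hl).union (integrableOn_Ioi_logRescale_min hD0 hl)

theorem integral_logRescale_min (hD0 : 0 < D) (hD1 : D < 1) (hl : 0 < l) :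
    ∫ t, logRescale D (fun ε => min (2 * ε) l) t = 2 ^ (1 - D) * l ^ D / (D * (1 - D)) := by
  have hD1' : 0 < 1 - D := sub_pos.2 hD1
  have hexp (s : ℝ) : Real.exp (s * Real.log (2 / l)) = 2 ^ s * l ^ (-s) := by
    rw [mul_comm, ← Real.rpow_def_of_pos (by positivity), Real.div_rpow two_pos.le hl.le,
      Real.rpow_neg hl.le, div_eq_mul_inv]
  have hleft : l * Real.exp ((1 - D) * Real.log (2 / l)) = 2 ^ (1 - D) * l ^ D := by
    rw [hexp, mul_left_comm, ← Real.rpow_one_add' hl.le (by linarith)]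
    ring_nf
  have hright : 2 * Real.exp (-D * Real.log (2 / l)) = 2 ^ (1 - D) * l ^ D := by
    rw [hexp, neg_neg, ← mul_assoc, ← Real.rpow_one_add' two_pos.le (by linarith)]
    ring_nf
  rw [← intervalIntegral.integral_Iic_add_Ioi (integrableOn_Iic_logRescale_min hD1 hl)
      (integrableOn_Ioi_logRescale_min hD0 hl),
    setIntegral_congr_fun measurableSet_Iic (eqOn_logRescale_min_Iic D hl),
    setIntegral_congr_fun measurableSet_Ioi (eqOn_logRescale_min_Ioi D hl),
    integral_const_mul, integral_const_mul, integral_exp_mul_Iic hD1',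
    integral_exp_mul_Ioi (neg_lt_zero.2 hD0), ← mul_div_assoc, hleft, mul_div_assoc', mul_neg,
    hright]
  field_simp
  ring

theorem tendsto_logRescale_min_atTop (hD0 : 0 < D) (hl : 0 < l) :
    Tendsto (logRescale D fun ε => min (2 * ε) l) atTop (𝓝 0) := by
  have hlim : Tendsto (fun t : ℝ => 2 * Real.exp (-D * t)) atTop (𝓝 0) := by
    simpa using (Real.tendsto_exp_atBot.comp
      (tendsto_id.const_mul_atTop_of_neg (neg_lt_zero.2 hD0))).const_mul 2
  refine hlim.congr' ?_
  filter_upwards [eventually_gt_atTop (Real.log (2 / l))] with t ht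
    using (eqOn_logRescale_min_Ioi D hl ht).symm

end GapProfile

section GapSum

variable {κ : Type*} [Fintype κ] {D : ℝ} {l : κ → ℝ}

theorem integrable_logRescale_sum_min (hD0 : 0 < D) (hD1 : D < 1) (hl : ∀ q, 0 < l q) :
    Integrable (logRescale D fun ε => ∑ q, min (2 * ε) (l q)) := by
  rw [logRescale_sum]
  exact integrable_finsetSum _ fun q _ => integrable_logRescale_min hD0 hD1 (hl q)

theorem integral_logRescale_sum_min (hD0 : 0 < D) (hD1 : D < 1) (hl : ∀ q, 0 < l q) :
    ∫ t, logRescale D (fun ε => ∑ q, min (2 * ε) (l q)) t =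
      2 ^ (1 - D) * (∑ q, l q ^ D) / (D * (1 - D)) := by
  rw [logRescale_sum, integral_finsetSum _ fun q _ => integrable_logRescale_min hD0 hD1 (hl q),
    Finset.mul_sum, Finset.sum_div]
  exact Finset.sum_congr rfl fun q _ => integral_logRescale_min hD0 hD1 (hl q)

theorem tendsto_logRescale_sum_min_atTop (hD0 : 0 < D) (hl : ∀ q, 0 < l q) :
    Tendsto (logRescale D fun ε => ∑ q, min (2 * ε) (l q)) atTop (𝓝 0) := by
  rw [logRescale_sum]
  simpa only [Finset.sum_const_zero] using
    tendsto_finsetSum Finset.univ fun q _ => tendsto_logRescale_min_atTop hD0 (hl q)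

end GapSum

section Content

theorem exists_convexHull_eq_Icc_of_isCompact {F : Set ℝ} (hF : IsCompact F) (hne : F.Nonempty) :
    ∃ A ∈ F, ∃ B ∈ F, convexHull ℝ F = Icc A B := by
  obtain ⟨A, hA, hAF⟩ := hF.exists_isLeast hne
  obtain ⟨B, hB, hBF⟩ := hF.exists_isGreatest hne
  refine ⟨A, hA, B, hB, Subset.antisymm
    (convexHull_min (fun x hx => ⟨hAF hx, hBF hx⟩) (convex_Icc A B)) ?_⟩
  rw [← segment_eq_Icc (hAF hB)]
  exact segment_subset_convexHull hA hB

theorem tendsto_volume_real_cthickening_mul_rpow_of_inter_Icc {F : Set ℝ} {A B D L : ℝ}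
    (hAB : A ≤ B) (hF : F ⊆ Icc A B) (hD0 : 0 < D)
    (hlim : Tendsto (fun ε => volume.real (Metric.cthickening ε F ∩ Icc A B) * ε ^ (D - 1))
      (𝓝[>] 0) (𝓝 L)) :
    Tendsto (fun ε => volume.real (Metric.cthickening ε F) * ε ^ (D - 1)) (𝓝[>] 0) (𝓝 L) := by
  have hpow : Tendsto (fun ε : ℝ => 2 * ε ^ D) (𝓝[>] 0) (𝓝 0) := by
    have := ((Real.continuousAt_rpow_const 0 D (Or.inr hD0.le)).tendsto.const_mul 2)
    rw [Real.zero_rpow hD0.ne', mul_zero] at this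
    exact this.mono_left nhdsWithin_le_nhds
  refine tendsto_of_tendsto_of_tendsto_of_le_of_le' hlim (by simpa using hlim.add hpow) ?_ ?_
  · filter_upwards [self_mem_nhdsWithin] with ε hε
    refine mul_le_mul_of_nonneg_right (measureReal_mono inter_subset_left ?_)
      (Real.rpow_nonneg hε.le _)
    refine measure_ne_top_of_subset (Metric.cthickening_subset_of_subset ε hF) ?_
    simp [cthickening_Icc hAB hε.le]
  · filter_upwards [self_mem_nhdsWithin] with ε hε
    calc volume.real (Metric.cthickening ε F) * ε ^ (D - 1)
      _ ≤ (volume.real (Metric.cthickening ε F ∩ Icc A B) + 2 * ε) * ε ^ (D - 1) :=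
          mul_le_mul_of_nonneg_right (volume_real_cthickening_le_add hAB hF hε.le)
            (Real.rpow_nonneg hε.le _)
      _ = volume.real (Metric.cthickening ε F ∩ Icc A B) * ε ^ (D - 1) + 2 * ε ^ D := by
          rw [add_mul, mul_assoc 2, ← Real.rpow_one_add' hε.le (by linarith), add_sub_cancel]

theorem monotone_volume_real_cthickening_inter_Icc (F : Set ℝ) (A B : ℝ) :
    Monotone fun ε => volume.real (Metric.cthickening ε F ∩ Icc A B) := fun _ _ hle =>
  measureReal_mono (inter_subset_inter_left _ (Metric.cthickening_mono hle F))
    (measure_ne_top_of_subset inter_subset_right (by simp))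

theorem IsSelfSimilarWithGaps.tendsto_volume_real_cthickening_mul_rpow {ι κ : Type*} [Fintype ι]
    [Fintype κ] {φ : ι → ℝ → ℝ} {r : ι → ℝ} {F : Set ℝ} {A B D : ℝ} {a b : κ → ℝ}
    (hF : IsSelfSimilarWithGaps φ r F A B a b) (hr1 : ∀ j, r j < 1) (hD0 : 0 < D) (hD1 : D < 1)
    (hD : ∑ j, r j ^ D = 1)
    (hdense : Dense (AddSubgroup.closure (range fun j => Real.log (r j)) : Set ℝ)) :
    Tendsto (fun ε => volume.real (Metric.cthickening ε F) * ε ^ (D - 1)) (𝓝[>] 0)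
      (𝓝 ((2 ^ (1 - D) * ∑ q, (b q - a q) ^ D) /
        (D * (1 - D) * ∑ j, r j ^ D * Real.log (r j)⁻¹))) := by
  have hl (q : κ) : 0 < b q - a q := sub_pos.2 (hF.gap_lt q)
  refine tendsto_volume_real_cthickening_mul_rpow_of_inter_Icc hF.le hF.subset_Icc hD0 ?_
  rw [← div_div, ← integral_logRescale_sum_min hD0 hD1 hl]
  exact tendsto_mul_rpow_of_scaling hF.ratio_pos hr1 hD1 hD hdense
    (monotone_volume_real_cthickening_inter_Icc F A B) (fun ε => measureReal_nonneg)
    (fun ε => measureReal_mono inter_subset_right (by simp))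
    (fun ε hε => hF.volume_real_cthickening_inter_Icc hε.le)
    (integrable_logRescale_sum_min hD0 hD1 hl) (tendsto_logRescale_sum_min_atTop hD0 hl)

end Content

/-- a non-lattice self-similar fractal `F ⊆ ℝ` (open set condition
with the interior of `I = [F]` as feasible open set, with gaps of lengths
`l₁, …, l_Q`) is Minkowski measurable with Minkowski content
`(2^{1-D} ∑_q l_q^D) / (D(1-D) ∑_j r_j^D log r_j⁻¹)`. -/
theorem stmt_3
    (J Q : ℕ) (hJ : 2 ≤ J) (hQ : 1 ≤ Q)
    (φ : Fin J → ℝ → ℝ)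
    (r : Fin J → ℝ) (hr0 : ∀ j, 0 < r j) (hr1 : ∀ j, r j < 1)
    (hsim : ∀ j x y, dist (φ j x) (φ j y) = r j * dist x y)
    (F : Set ℝ) (hFcpt : IsCompact F) (hFne : F.Nonempty)
    (hFinv : F = ⋃ j, φ j '' F)
    -- open set condition with the interior of I = [F] as feasible open set
    (hOSC₁ : ∀ j, φ j '' interior (convexHull ℝ F) ⊆ interior (convexHull ℝ F))
    (hOSC₂ : ∀ j k, j ≠ k →
      Disjoint (φ j '' interior (convexHull ℝ F)) (φ k '' interior (convexHull ℝ F)))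
    -- the gaps: I \ ⋃ⱼ φⱼ(I) consists of Q open intervals of lengths l₁, …, l_Q
    (l : Fin Q → ℝ) (a b : Fin Q → ℝ)
    (hab : ∀ q, a q < b q)
    (hlen : ∀ q, l q = b q - a q)
    (hdisj : ∀ q q', q ≠ q' → Disjoint (Set.Ioo (a q) (b q)) (Set.Ioo (a q') (b q')))
    (hgaps : convexHull ℝ F \ (⋃ j, φ j '' convexHull ℝ F) = ⋃ q, Set.Ioo (a q) (b q))
    -- the Minkowski dimension D ∈ (0,1)
    (D : ℝ) (hD0 : 0 < D) (hD1 : D < 1) (hD : ∑ j, r j ^ D = 1)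
    -- non-lattice type
    (hnonlat : Dense ((AddSubgroup.closure (Set.range fun j => Real.log (r j)) :
        AddSubgroup ℝ) : Set ℝ)) :
    0 < (2 ^ (1 - D) * ∑ q, l q ^ D) / (D * (1 - D) * ∑ j, r j ^ D * Real.log (r j)⁻¹) ∧
    Tendsto (fun ε : ℝ => (volume (Metric.cthickening ε F)).toReal * ε ^ (D - 1))
      (nhdsWithin 0 (Set.Ioi 0))
      (nhds ((2 ^ (1 - D) * ∑ q, l q ^ D) /
        (D * (1 - D) * ∑ j, r j ^ D * Real.log (r j)⁻¹))) := by
  obtain ⟨A, hA, B, hB, hull⟩ := exists_convexHull_eq_Icc_of_isCompact hFcpt hFne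
  simp only [hull, interior_Icc] at hOSC₂ hgaps
  have hF : IsSelfSimilarWithGaps φ r F A B a b :=
    { ratio_pos := hr0, dist_eq := hsim, eq_iUnion_image := hFinv, left_mem := hA, right_mem := hB
      subset_Icc := hull ▸ subset_convexHull ℝ F
      disjoint_image := fun j k => hOSC₂ j k
      gap_lt := hab
      disjoint_gap := fun q q' => hdisj q q'
      sdiff_eq_iUnion_gap := hgaps }
  obtain rfl : l = fun q => b q - a q := funext hlen
  refine ⟨?_, hF.tendsto_volume_real_cthickening_mul_rpow hr1 hD0 hD1 hD hnonlat⟩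
  have hgapsum : 0 < ∑ q, (b q - a q) ^ D :=
    Finset.sum_pos (fun q _ => Real.rpow_pos_of_pos (sub_pos.2 (hab q)) D)
      ⟨⟨0, hQ⟩, Finset.mem_univ _⟩
  have hmean : 0 < ∑ j, r j ^ D * Real.log (r j)⁻¹ :=
    Finset.sum_pos (fun j _ => mul_pos (Real.rpow_pos_of_pos (hr0 j) D)
      (Real.log_pos ((one_lt_inv₀ (hr0 j)).2 (hr1 j)))) ⟨⟨0, by omega⟩, Finset.mem_univ _⟩
  exact div_pos (by positivity) (mul_pos (mul_pos hD0 (sub_pos.2 hD1)) hmean)
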